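/- Let d ≥ 2 be an integer, I ≥ 1, and let N_1, …, N_I ≥ 2 be pairwise coprime integers; for each i let A_i ∈ ℤ[X] be a monic polynomial of degree a_i with 1 ≤ a_i ≤ d. Suppose P and P' are both irreducible polynomials in ℤ[X] of degree d with naive height at most H ≥ 1 such that for every i, both P mod N_i and P' mod N_i are multiples of A_i mod N_i in (ℤ/N_iℤ)[X]. If Π_{i=1}^{I} N_i^{a_i} > (2d)!^{d+1} · H^{d(d+1)} · 2^{d²(d+1)/4}, then P' = P or P' = −P; that is, P is unique up to sign among irreducible degree-d integer polynomials of naive height at most H satisfying all the congruence conditions. -/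

import Mathlib

open Polynomial in
theorem aux_det (n N a : ℕ) (ha : 1 ≤ a) (han : a < n) (A : ℤ[X]) (hA : A.Monic)
    (hAa : A.natDegree = a) (c : Fin n → ℤ[X]) (hc : ∀ j, (c j).natDegree < n)
    (hdvd : ∀ j, A.map (Int.castRingHom (ZMod N)) ∣ (c j).map (Int.castRingHom (ZMod N))) :
    (N : ℤ) ^ a ∣ (Matrix.of fun i j : Fin n => (c j).coeff i).det := by
  obtain ⟨b, rfl⟩ := Nat.exists_eq_add_of_le han.le
  have hr : ∀ j l, (N : ℤ) ∣ (c j %ₘ A).coeff l := by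
    intro j l
    have h := (modByMonic_eq_zero_iff_dvd (hA.map _)).2 (hdvd j)
    rw [← map_modByMonic _ hA] at h
    have h2 := congrArg (fun p => p.coeff l) h
    simp only [coeff_map, coeff_zero, eq_intCast] at h2
    exact (ZMod.intCast_zmod_eq_zero_iff_dvd _ _).1 h2
  choose e he using hr
  have key : (Matrix.of fun i j : Fin (a + b) => (c j).coeff i) =
      (Matrix.of fun i k : Fin (a + b) => Fin.addCases (motive := fun _ => ℤ)
        (fun l : Fin a => (X ^ (l : ℕ) : ℤ[X]).coeff i)
        (fun l : Fin b => (A * X ^ (l : ℕ)).coeff i) k) *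
      Matrix.diagonal (fun k : Fin (a + b) => Fin.addCases (motive := fun _ => ℤ)
        (fun _ => (N : ℤ)) (fun _ => 1) k) *
      (Matrix.of fun k j : Fin (a + b) => Fin.addCases (motive := fun _ => ℤ)
        (fun l : Fin a => e j l)
        (fun l : Fin b => (c j /ₘ A).coeff l) k) := by
    ext i j
    rw [Matrix.mul_apply]
    simp only [Matrix.mul_diagonal, Matrix.of_apply, Fin.sum_univ_add, Fin.addCases_left,
      Fin.addCases_right, mul_one]
    have h1 : c j %ₘ A = ∑ l ∈ Finset.range a, C ((c j %ₘ A).coeff l) * X ^ l := by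
      apply as_sum_range_C_mul_X_pow'
      rw [← hAa]
      apply natDegree_modByMonic_lt _ hA
      rintro rfl
      simp at hAa
      omega
    have h2 : c j /ₘ A = ∑ l ∈ Finset.range b, C ((c j /ₘ A).coeff l) * X ^ l := by
      apply as_sum_range_C_mul_X_pow'
      rw [natDegree_divByMonic _ hA]
      have := hc j
      omega
    have h3 := modByMonic_add_div (c j) A
    rw [h1, h2] at h3
    conv_lhs => rw [← h3]
    rw [coeff_add, finset_sum_coeff, Finset.mul_sum, finset_sum_coeff, Finset.sum_range,
      Finset.sum_range]
    congr 1
    · refine Finset.sum_congr rfl fun l _ => ?_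
      rw [coeff_C_mul, he]; ring
    · refine Finset.sum_congr rfl fun l _ => ?_
      rw [mul_left_comm, coeff_C_mul]; ring
  rw [key, Matrix.det_mul, Matrix.det_mul, Matrix.det_diagonal, Fin.prod_univ_add]
  simp only [Fin.addCases_left, Fin.addCases_right, Finset.prod_const, Finset.card_univ,
    Fintype.card_fin, one_pow, mul_one]
  exact (Dvd.intro_left _ rfl).mul_right _

open Polynomial in
theorem aux_res (d N a : ℕ) (ha : 1 ≤ a) (had : a ≤ d) (A : ℤ[X]) (hA : A.Monic)
    (hAa : A.natDegree = a) (P Q : ℤ[X]) (hP : P.natDegree = d) (hQ : Q.natDegree = d)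
    (hPA : A.map (Int.castRingHom (ZMod N)) ∣ P.map (Int.castRingHom (ZMod N)))
    (hQA : A.map (Int.castRingHom (ZMod N)) ∣ Q.map (Int.castRingHom (ZMod N))) :
    (N : ℤ) ^ a ∣ resultant P Q d d := by
  have key : sylvester P Q d d = Matrix.of fun i j : Fin (d + d) =>
      ((Fin.addCases (motive := fun _ => ℤ[X]) (fun l : Fin d => Q * X ^ (l : ℕ))
        (fun l : Fin d => P * X ^ (l : ℕ)) j : ℤ[X])).coeff i := by
    ext i j
    induction j using Fin.addCases with
    | left l =>
      simp only [sylvester, Matrix.of_apply, Fin.addCases_left, coeff_mul_X_pow', Set.mem_Icc]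
      by_cases h : (l : ℕ) ≤ i
      · by_cases h2 : (i : ℕ) ≤ l + d
        · simp [h, h2]
        · simp only [h, h2, and_false, if_false, if_true]
          exact (coeff_eq_zero_of_natDegree_lt (by omega)).symm
      · simp [h]
    | right l =>
      simp only [sylvester, Matrix.of_apply, Fin.addCases_right, coeff_mul_X_pow', Set.mem_Icc]
      by_cases h : (l : ℕ) ≤ i
      · by_cases h2 : (i : ℕ) ≤ l + d
        · simp [h, h2]
        · simp only [h, h2, and_false, if_false, if_true]
          exact (coeff_eq_zero_of_natDegree_lt (by omega)).symm
      · simp [h]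
  rw [resultant, key]
  apply aux_det (d + d) N a ha (by omega) A hA hAa
  · intro j
    induction j using Fin.addCases with
    | left l =>
      simp only [Fin.addCases_left]
      have := natDegree_mul_le (p := Q) (q := X ^ (l : ℕ))
      rw [natDegree_X_pow] at this
      omega
    | right l =>
      simp only [Fin.addCases_right]
      have := natDegree_mul_le (p := P) (q := X ^ (l : ℕ))
      rw [natDegree_X_pow] at this
      omega
  · intro j
    induction j using Fin.addCases with
    | left l =>
      simp only [Fin.addCases_left, Polynomial.map_mul]
      exact hQA.mul_right _
    | right l =>
      simp only [Fin.addCases_right, Polynomial.map_mul]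
      exact hPA.mul_right _

open Polynomial in
theorem aux_bound (d : ℕ) (H : ℝ) (hH : 1 ≤ H) (P Q : ℤ[X])
    (hPH : ∀ n : ℕ, |(P.coeff n : ℝ)| ≤ H) (hQH : ∀ n : ℕ, |(Q.coeff n : ℝ)| ≤ H) :
    |((resultant P Q d d : ℤ) : ℝ)| ≤ (Nat.factorial (2 * d) : ℝ) * H ^ (2 * d) := by
  have h := Matrix.det_le (A := sylvester (P.map (Int.castRingHom ℝ)) (Q.map (Int.castRingHom ℝ)) d d)
    (abv := AbsoluteValue.abs) (x := H) (by
      intro i j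
      have h0 : (0 : ℝ) ≤ H := by linarith
      induction j using Fin.addCases with
      | left l =>
        simp only [sylvester, Matrix.of_apply, Fin.addCases_left]
        split_ifs
        · simpa using hQH _
        · simpa using h0
      | right l =>
        simp only [sylvester, Matrix.of_apply, Fin.addCases_right]
        split_ifs
        · simpa using hPH _
        · simpa using h0)
  have h2 := resultant_map_map P Q d d (Int.castRingHom ℝ)
  rw [resultant] at h2
  rw [h2] at h
  simpa [← two_mul] using h

open Polynomial in
theorem aux_ne (P Q : ℤ[X]) (d : ℕ) (hd : 2 ≤ d) (hP : Irreducible P) (hQ : Irreducible Q)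
    (hPd : P.natDegree = d) (hQd : Q.natDegree = d)
    (h0 : resultant P Q d d = 0) : Q = P ∨ Q = -P := by
  have pP := hP.isPrimitive (by omega)
  have h1 := resultant_map_map P Q d d (Int.castRingHom ℚ)
  rw [h0, map_zero] at h1
  have e1 : (P.map (Int.castRingHom ℚ)).natDegree = d := by
    rw [natDegree_map_eq_of_injective (RingHom.injective_int _), hPd]
  have e2 : (Q.map (Int.castRingHom ℚ)).natDegree = d := by
    rw [natDegree_map_eq_of_injective (RingHom.injective_int _), hQd]
  have h2 : resultant (P.map (Int.castRingHom ℚ)) (Q.map (Int.castRingHom ℚ)) = 0 := by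
    rw [e1, e2]; exact h1
  have h3 := (resultant_eq_zero_iff.1 h2).2
  have iP := (IsPrimitive.Int.irreducible_iff_irreducible_map_cast pP).1 hP
  rw [iP.coprime_iff_not_dvd, not_not, ← IsPrimitive.Int.dvd_iff_map_cast_dvd_map_cast _ _ pP] at h3
  have h4 : Associated P Q := hP.associated_of_dvd hQ h3
  obtain ⟨u, hu⟩ := h4
  obtain ⟨r, hr, hr2⟩ := Polynomial.isUnit_iff.1 u.isUnit
  rw [← hr2] at hu
  rcases Int.isUnit_iff.1 hr with rfl | rfl
  · left; simpa using hu.symm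
  · right; simpa using hu.symm

/-- **Interpolation and lattices (uniqueness).**  Let `N₁, …, N_I` be pairwise coprime
integers `≥ 2` and `Aᵢ ∈ ℤ[X]` monic of degree `aᵢ`, `1 ≤ aᵢ ≤ d`.  Suppose `P` and `P'`
are irreducible integer polynomials of degree `d ≥ 2` and naive height `≤ H` such that for
every `i`, both `P mod Nᵢ` and `P' mod Nᵢ` are multiples of `Aᵢ mod Nᵢ`.  If
`∏ Nᵢ^{aᵢ} > (2d)!^{d+1}·H^{d(d+1)}·2^{d²(d+1)/4}`, then `P' = P` or `P' = −P`. -/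
theorem stmt_13 (d : ℕ) (hd : 2 ≤ d) (I : ℕ) (hI : 1 ≤ I)
    (N : Fin I → ℕ) (hN : ∀ i, 2 ≤ N i)
    (hcop : ∀ i j : Fin I, i ≠ j → Nat.Coprime (N i) (N j))
    (A : Fin I → Polynomial ℤ) (a : Fin I → ℕ)
    (hAmonic : ∀ i, (A i).Monic) (hAdeg : ∀ i, (A i).natDegree = a i)
    (ha1 : ∀ i, 1 ≤ a i) (had : ∀ i, a i ≤ d)
    (H : ℝ) (hH : 1 ≤ H)
    (P P' : Polynomial ℤ)
    (hP : Irreducible P) (hPdeg : P.natDegree = d)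
    (hPH : ∀ n : ℕ, |(P.coeff n : ℝ)| ≤ H)
    (hP' : Irreducible P') (hP'deg : P'.natDegree = d)
    (hP'H : ∀ n : ℕ, |(P'.coeff n : ℝ)| ≤ H)
    (hPA : ∀ i, (A i).map (Int.castRingHom (ZMod (N i))) ∣
        P.map (Int.castRingHom (ZMod (N i))))
    (hP'A : ∀ i, (A i).map (Int.castRingHom (ZMod (N i))) ∣
        P'.map (Int.castRingHom (ZMod (N i))))
    (hbig : (Nat.factorial (2 * d) : ℝ) ^ (d + 1) * H ^ (d * (d + 1)) *
        (2 : ℝ) ^ (((d ^ 2 * (d + 1) : ℕ) : ℝ) / 4) < ∏ i, (N i : ℝ) ^ (a i)) :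
    P' = P ∨ P' = -P := by
  refine aux_ne P P' d hd hP hP' hPdeg hP'deg ?_
  by_contra hne
  have hdvd : (∏ i, (N i : ℤ) ^ (a i)) ∣ Polynomial.resultant P P' d d := by
    apply Fintype.prod_dvd_of_coprime
    · intro i j hij
      exact (Nat.isCoprime_iff_coprime.2 (hcop i j hij)).pow
    · intro i
      exact aux_res d (N i) (a i) (ha1 i) (had i) (A i) (hAmonic i) (hAdeg i) P P' hPdeg hP'deg
        (hPA i) (hP'A i)
  have hle := Int.le_of_dvd (abs_pos.2 hne) ((dvd_abs _ _).2 hdvd)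
  have hle2 : (∏ i, (N i : ℝ) ^ (a i)) ≤ |((Polynomial.resultant P P' d d : ℤ) : ℝ)| := by
    exact_mod_cast hle
  have hb := aux_bound d H hH P P' hPH hP'H
  have hf : (1 : ℝ) ≤ (Nat.factorial (2 * d) : ℝ) := by
    exact_mod_cast Nat.succ_le_of_lt (Nat.factorial_pos _)
  have h1 : (Nat.factorial (2 * d) : ℝ) ≤ (Nat.factorial (2 * d) : ℝ) ^ (d + 1) :=
    le_self_pow₀ hf (by omega)
  have h2 : H ^ (2 * d) ≤ H ^ (d * (d + 1)) := pow_le_pow_right₀ hH (by nlinarith)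
  have h3 : (1 : ℝ) ≤ (2 : ℝ) ^ (((d ^ 2 * (d + 1) : ℕ) : ℝ) / 4) :=
    Real.one_le_rpow (by norm_num) (by positivity)
  have h4 : (Nat.factorial (2 * d) : ℝ) * H ^ (2 * d) ≤
      (Nat.factorial (2 * d) : ℝ) ^ (d + 1) * H ^ (d * (d + 1)) :=
    mul_le_mul h1 h2 (by positivity) (by positivity)
  have h5 := le_mul_of_one_le_right (a := (Nat.factorial (2 * d) : ℝ) ^ (d + 1) * H ^ (d * (d + 1)))
    (by positivity) h3
  linarith
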